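/- Let σ be a Borel probability measure on ℝ with support contained in [0,1], and let ω : ℕ → ℝ be a sequence with 0 < ω_k < 1 for all k and such that ∏_{i=0}^{k−1} ω_i² = ∫ r^k dσ(r) for every k ∈ ℕ. Define τ_k := ω_k · √(1 − ω_{k+1}²)/√(1 − ω_k²). Then for every k ∈ ℕ: ∏_{i=0}^{k−1} τ_i² = (1 − ω_0²)⁻¹ · ∫ r^k (1 − r) dσ(r); in particular, 1 − ω_0² = ∫ (1 − r) dσ(r). -/

import Mathlib

open MeasureTheory

/-- The (topological) support of a Borel measure: the set of points all of whose
open neighborhoods have positive measure. -/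
def msupp {X : Type*} [TopologicalSpace X] [MeasurableSpace X] (μ : Measure X) : Set X :=
  {x | ∀ U : Set X, IsOpen U → x ∈ U → 0 < μ U}

/-!
Integrating `f ^ k * (1 - f) = f ^ k - f ^ (k + 1)` turns the moment hypothesis into
`∫ f ^ k * (1 - f) = (∏ i < k, ω i ^ 2) * (1 - ω k ^ 2)`. In `∏ i < k, τ i`, the factors other than
the `ω i` telescope to `√(1 - ω k ^ 2) / √(1 - ω 0 ^ 2)`.
-/

/-- The weights `τ_k` of the first row of the spherically isometric 2-variable weighted shift built
from the unilateral weighted shift with weights `ω`. -/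
noncomputable def firstRowWeight (ω : ℕ → ℝ) (k : ℕ) : ℝ :=
  ω k * √(1 - ω (k + 1) ^ 2) / √(1 - ω k ^ 2)

theorem prod_range_mul_succ_div {K : Type*} [Field K] (a c : ℕ → K) (hc : ∀ k, c k ≠ 0) (k : ℕ) :
    ∏ i ∈ Finset.range k, a i * c (i + 1) / c i = (∏ i ∈ Finset.range k, a i) * c k / c 0 := by
  induction k with
  | zero => simp [hc 0]
  | succ k ih =>
    rw [Finset.prod_range_succ, Finset.prod_range_succ, ih]
    have hk := hc k
    field_simp

theorem firstRowWeight_sq {ω : ℕ → ℝ} {k : ℕ} (hk : ω k ^ 2 ≤ 1) (hk' : ω (k + 1) ^ 2 ≤ 1) :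
    firstRowWeight ω k ^ 2 = ω k ^ 2 * (1 - ω (k + 1) ^ 2) / (1 - ω k ^ 2) := by
  rw [firstRowWeight, div_pow, mul_pow, Real.sq_sqrt (sub_nonneg.2 hk),
    Real.sq_sqrt (sub_nonneg.2 hk')]

theorem prod_firstRowWeight_sq {ω : ℕ → ℝ} (hω : ∀ k, ω k ^ 2 < 1) (k : ℕ) :
    ∏ i ∈ Finset.range k, firstRowWeight ω i ^ 2
      = (∏ i ∈ Finset.range k, ω i ^ 2) * (1 - ω k ^ 2) / (1 - ω 0 ^ 2) := by
  simp only [firstRowWeight_sq (hω _).le (hω _).le]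
  exact prod_range_mul_succ_div (ω · ^ 2) (1 - ω · ^ 2) (fun i => (sub_pos.2 (hω i)).ne') k

section Moments

variable {Ω : Type*} [MeasurableSpace Ω] {μ : Measure Ω}

theorem integral_pow_mul_one_sub {A : Type*} [NormedRing A] [NormedSpace ℝ A] {f : Ω → A} {k : ℕ}
    (hk : Integrable (fun x => f x ^ k) μ) (hk' : Integrable (fun x => f x ^ (k + 1)) μ) :
    ∫ x, f x ^ k * (1 - f x) ∂μ = ∫ x, f x ^ k ∂μ - ∫ x, f x ^ (k + 1) ∂μ := by
  simp only [mul_sub, mul_one, ← pow_succ]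
  exact integral_sub hk hk'

variable {f : Ω → ℝ} {ω : ℕ → ℝ}

theorem integrable_pow_of_prod_sq_eq_integral (hω : ∀ k, ω k ≠ 0)
    (hmom : ∀ k, ∏ i ∈ Finset.range k, ω i ^ 2 = ∫ x, f x ^ k ∂μ) (k : ℕ) :
    Integrable (fun x => f x ^ k) μ := by
  refine Integrable.of_integral_ne_zero ?_
  rw [← hmom k]
  exact Finset.prod_ne_zero_iff.2 fun i _ => pow_ne_zero 2 (hω i)

theorem integral_pow_mul_one_sub_eq_prod_sq (hω : ∀ k, ω k ≠ 0)
    (hmom : ∀ k, ∏ i ∈ Finset.range k, ω i ^ 2 = ∫ x, f x ^ k ∂μ) (k : ℕ) :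
    ∫ x, f x ^ k * (1 - f x) ∂μ = (∏ i ∈ Finset.range k, ω i ^ 2) * (1 - ω k ^ 2) := by
  have hint := integrable_pow_of_prod_sq_eq_integral hω hmom
  rw [integral_pow_mul_one_sub (hint k) (hint (k + 1)), ← hmom, ← hmom, Finset.prod_range_succ]
  ring

theorem stmt_14_general (hω_ne : ∀ k, ω k ≠ 0) (hω_lt : ∀ k, |ω k| < 1)
    (hmom : ∀ k, ∏ i ∈ Finset.range k, ω i ^ 2 = ∫ x, f x ^ k ∂μ) :
    (∀ k, ∏ i ∈ Finset.range k, firstRowWeight ω i ^ 2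
        = (1 - ω 0 ^ 2)⁻¹ * ∫ x, f x ^ k * (1 - f x) ∂μ) ∧
      1 - ω 0 ^ 2 = ∫ x, (1 - f x) ∂μ := by
  have hmom' := integral_pow_mul_one_sub_eq_prod_sq hω_ne hmom
  refine ⟨fun k => ?_, by simpa using (hmom' 0).symm⟩
  rw [hmom', prod_firstRowWeight_sq fun i => (sq_lt_one_iff_abs_lt_one _).2 (hω_lt i),
    div_eq_inv_mul]

end Moments

/-- In the construction of a spherically isometric embedding of a contractive subnormal
shift with weights `ω` and Berger measure `σ`, the first-row weights
`τ_k = ω_k √(1 − ω_{k+1}²)/√(1 − ω_k²)` have moments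
`∏_{i<k} τᵢ² = (1 − ω₀²)⁻¹ ∫ r^k (1 − r) dσ(r)`. -/
theorem stmt_14 (σ : Measure ℝ) [IsProbabilityMeasure σ]
    (hsupp : msupp σ ⊆ Set.Icc (0 : ℝ) 1)
    (ω : ℕ → ℝ) (hω : ∀ k, 0 < ω k ∧ ω k < 1)
    (hmom : ∀ k : ℕ, ∏ i ∈ Finset.range k, (ω i) ^ 2 = ∫ r : ℝ, r ^ k ∂σ)
    (τ : ℕ → ℝ)
    (hτ : ∀ k, τ k = ω k * Real.sqrt (1 - (ω (k + 1)) ^ 2) / Real.sqrt (1 - (ω k) ^ 2)) :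
    (∀ k : ℕ, ∏ i ∈ Finset.range k, (τ i) ^ 2
        = (1 - (ω 0) ^ 2)⁻¹ * ∫ r : ℝ, r ^ k * (1 - r) ∂σ) ∧
    1 - (ω 0) ^ 2 = ∫ r : ℝ, (1 - r) ∂σ := by
  obtain rfl : τ = firstRowWeight ω := funext hτ
  exact stmt_14_general (fun k => (hω k).1.ne')
    (fun k => abs_lt.2 ⟨by linarith [hω k], (hω k).2⟩) hmom
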